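/- Dominant energy condition for the transformed energy-momentum tensor (Lemma 4.2): There exist positive constants ā and C, depending only on M, such that if |a| < ā, then: (i) for every smooth ũ on the exterior Kerr region and every pair of future-directed non-spacelike vectors X, Y at a point of the exterior region (non-spacelike with respect to the Kerr metric g, future-directed relative to ∂_t), one has −𝒯̃[ũ]^α{}_β·g_{αγ}·X^β Y^γ ≥ 0, where 𝒯̃[ũ]^α{}_β = −G̃^{αγ}(∂_γũ)(∂_βũ) + (1/2)δ^α_β(G̃^{ρσ}(∂_ρũ)(∂_σũ) + Vũ²); and (ii) pointwise, C·P̃^t_{T_χ}[ũ] ≥ (T_⊥ũ)² + (∂_{r_*}ũ)² + Ṽ_Q·|∇̸ũ|² + V·ũ². -/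

import Mathlib

/-!
The slices of constant `t` have normal direction `T_⊥ = ∂_t + ω ∂_φ` with `ω = 2aMr/Π`, and in the
frame `(T_⊥, ∂_{r_*}, ∂_θ, ∂_φ)` the Kerr metric is diagonal, with entries
`-ΣΔ/Π, ΣΔ/(r²+a²)², Σ, Π sin²θ/Σ`. The only nontrivial input is the identity
`Π (Δ - a² sin²θ) + (2aMr)² sin²θ = Σ² Δ` (`blockIdentity`). With `Ω = ΣΔ/(r²+a²)²` the matrix
`Gtilde` is `Ω` times the inverse metric, so it is diagonal in the same frame.

Part (i). The contracted tensor equals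
`Ω ((Xu)(Yu) - ½ g(X,Y) g⁻¹(du,du)) - ½ g(X,Y) V u²`. After rescaling to an orthonormal frame the
first term is the classical dominant energy condition in Minkowski space (`minkowski_dec`): for a
future causal `X` the covector `(Xu) du - ½ g(X,·) g⁻¹(du,du)` has square norm
`¼ g(X,X) (g⁻¹(du,du))² ≤ 0` and is nonnegative on the unit normal, so it is nonnegative on every
future causal `Y`. The second term is nonnegative because `g(X,Y) ≤ 0` and, for small `a`, `V ≥ 0`.

Part (ii). Put `δ = χ ω_H - ω`, so that `T_χ = T_⊥ + δ ∂_φ`. Then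
`2 P̃^t = (Π/(r²+a²)²) ((T_⊥u)² + 2 δ (T_⊥u) ∂_φu) + (∂_{r_*}u)² + Ṽ_Q (∂_θu)²
  + (Σ²/Π) Ṽ_Q sin⁻²θ (∂_φu)² + V u²`,
and everything reduces to the smallness `δ² ≤ Ṽ_Q / 16` (`shift_abs_le`). Near the horizon this
uses that `ω_H - ω` vanishes at `r = r₊` to first order while `(r - r₊)² ≤ Δ`; for `r ≥ 10M` it uses
that `ω` decays like `aM/r³`. In the transition region `δ` is a convex combination of the two cases.
-/


noncomputable section

open MeasureTheory Filter Topology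

namespace KerrPaper

abbrev V4 : Type := Fin 4 → ℝ

/-- Partial derivative in the `i`-th coordinate (coordinates: 0 = t, 1 = r, 2 = θ, 3 = φ). -/
def pd (i : Fin 4) (ψ : V4 → ℝ) : V4 → ℝ :=
  fun x => deriv (fun s => ψ (Function.update x i s)) (x i)

def rplus (M a : ℝ) : ℝ := M + Real.sqrt (M ^ 2 - a ^ 2)

def Δk (M a r : ℝ) : ℝ := r ^ 2 - 2 * M * r + a ^ 2

def SigK (a r θ : ℝ) : ℝ := r ^ 2 + a ^ 2 * Real.cos θ ^ 2

def PiK (M a r θ : ℝ) : ℝ := (r ^ 2 + a ^ 2) ^ 2 - a ^ 2 * Real.sin θ ^ 2 * Δk M a r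

def ωH (M a : ℝ) : ℝ := a / (rplus M a ^ 2 + a ^ 2)

/-- The exterior region in Boyer–Lindquist coordinates `(t, r, θ, φ)`. -/
def ext (M a : ℝ) : Set V4 := {x | rplus M a < x 1 ∧ 0 < x 2 ∧ x 2 < Real.pi}

/-- The Carter operator. -/
def carterQ (a : ℝ) (ψ : V4 → ℝ) : V4 → ℝ :=
  fun x =>
    (Real.sin (x 2))⁻¹ * pd 2 (fun y => Real.sin (y 2) * pd 2 ψ y) x +
      Real.cos (x 2) ^ 2 / Real.sin (x 2) ^ 2 * pd 3 (pd 3 ψ) x +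
      a ^ 2 * Real.sin (x 2) ^ 2 * pd 0 (pd 0 ψ) x

/-- The operator ℛ(r; M, a; ∂_t, ∂_φ, Q). -/
def curlyR (M a : ℝ) (ψ : V4 → ℝ) : V4 → ℝ :=
  fun x =>
    -((x 1 ^ 2 + a ^ 2) ^ 2) * pd 0 (pd 0 ψ) x - 4 * a * M * x 1 * pd 0 (pd 3 ψ) x +
      (Δk M a (x 1) - a ^ 2) * pd 3 (pd 3 ψ) x + Δk M a (x 1) * carterQ a ψ x

/-- The (rescaled) wave operator □ = Σ ∇^α∇_α. -/
def box (M a : ℝ) (ψ : V4 → ℝ) : V4 → ℝ :=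
  fun x => pd 1 (fun y => Δk M a (y 1) * pd 1 ψ y) x + (Δk M a (x 1))⁻¹ * curlyR M a ψ x

/-- ψ is a smooth solution of the wave equation on the exterior region. -/
def IsWaveSol (M a : ℝ) (ψ : V4 → ℝ) : Prop :=
  ContDiffOn ℝ (⊤ : ℕ∞) ψ (ext M a) ∧ ∀ x ∈ ext M a, box M a ψ x = 0

/-- G^{αβ} = Σ g^{αβ}, the rescaled inverse Kerr metric in BL coordinates. -/
def Ginv (M a r θ : ℝ) : Matrix (Fin 4) (Fin 4) ℝ :=
  !![-(PiK M a r θ) / Δk M a r, 0, 0, -(2 * a * M * r) / Δk M a r;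
     0, Δk M a r, 0, 0;
     0, 0, 1, 0;
     -(2 * a * M * r) / Δk M a r, 0, 0,
       (Δk M a r - a ^ 2 * Real.sin θ ^ 2) / (Δk M a r * Real.sin θ ^ 2)]

/-- The momentum P_X^α[ψ]. -/
def momentum (M a : ℝ) (X : V4 → Fin 4 → ℝ) (ψ : V4 → ℝ) (α : Fin 4) : V4 → ℝ :=
  fun x =>
    -(∑ γ, Ginv M a (x 1) (x 2) α γ * pd γ ψ x) * (∑ β, pd β ψ x * X x β) +
      (1 / 2) * X x α * ∑ ρ, ∑ σ, Ginv M a (x 1) (x 2) ρ σ * pd ρ ψ x * pd σ ψ x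

/-- Parameter domain of a constant-t slice: (r, θ, φ). -/
def sliceSet (M a : ℝ) : Set (ℝ × ℝ × ℝ) :=
  Set.Ioi (rplus M a) ×ˢ Set.Ioo 0 Real.pi ×ˢ Set.Ioo 0 (2 * Real.pi)

def pt (t : ℝ) (p : ℝ × ℝ × ℝ) : V4 := ![t, p.1, p.2.1, p.2.2]

/-- The energy E_X[ψ](t) = ∫ P_X^t[ψ] sinθ dr dθ dφ. -/
def energy (M a : ℝ) (X : V4 → Fin 4 → ℝ) (ψ : V4 → ℝ) (t : ℝ) : ℝ :=
  ∫ p in sliceSet M a, momentum M a X ψ 0 (pt t p) * Real.sin p.2.1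

/-- χ is a smooth nonincreasing cutoff, ≡ 1 for r ≤ 10M and ≡ 0 for r ≥ 11M. -/
def IsCutoff (M : ℝ) (χ : ℝ → ℝ) : Prop :=
  ContDiff ℝ (⊤ : ℕ∞) χ ∧ Antitone χ ∧ (∀ r ≤ 10 * M, χ r = 1) ∧ ∀ r, 11 * M ≤ r → χ r = 0

/-- The blended vector field T_χ = ∂_t + χ ω_H ∂_φ. -/
def Tchi (M a : ℝ) (χ : ℝ → ℝ) : V4 → Fin 4 → ℝ :=
  fun x => ![1, 0, 0, χ (x 1) * ωH M a]

/-- Triples (n_t, n_φ, n_Q) with n_t + n_φ + 2 n_Q ≤ n, indexing ∪_{i ≤ n} 𝕊_i. -/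
def symTriples (n : ℕ) : Finset (ℕ × ℕ × ℕ) :=
  (Finset.range (n + 1) ×ˢ Finset.range (n + 1) ×ˢ Finset.range (n + 1)).filter
    fun m => m.1 + m.2.1 + 2 * m.2.2 ≤ n

/-- The symmetry operator ∂_t^{n_t} ∂_φ^{n_φ} Q^{n_Q}. -/
def symOp (a : ℝ) (m : ℕ × ℕ × ℕ) (ψ : V4 → ℝ) : V4 → ℝ :=
  (pd 0)^[m.1] ((pd 3)^[m.2.1] ((carterQ a)^[m.2.2] ψ))

/-- The order-(n+1) energy E^{n+1}_X[ψ](t) = Σ_{i=0}^{n} Σ_{S ∈ 𝕊_i} E_X[Sψ](t). -/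
def energyUpTo (M a : ℝ) (X : V4 → Fin 4 → ℝ) (n : ℕ) (ψ : V4 → ℝ) (t : ℝ) : ℝ :=
  ∑ m ∈ symTriples n, energy M a X (symOp a m ψ) t

/-- The pointwise norm ‖ψ‖_n². -/
def ptNormSq (a : ℝ) (n : ℕ) (ψ : V4 → ℝ) : V4 → ℝ :=
  fun x => ∑ m ∈ symTriples n, (symOp a m ψ x) ^ 2

/-- The pointwise norm ‖∇̸ψ‖_n². -/
def angNormSq (a : ℝ) (n : ℕ) (ψ : V4 → ℝ) : V4 → ℝ :=
  fun x => ∑ m ∈ symTriples n,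
    ((pd 2 (symOp a m ψ) x) ^ 2 + (Real.sin (x 2) ^ 2)⁻¹ * (pd 3 (symOp a m ψ) x) ^ 2)

def energyIntegrable (M a : ℝ) (X : V4 → Fin 4 → ℝ) (ψ : V4 → ℝ) (t : ℝ) : Prop :=
  IntegrableOn (fun p => momentum M a X ψ 0 (pt t p) * Real.sin p.2.1) (sliceSet M a)

def energyFiniteUpTo (M a : ℝ) (X : V4 → Fin 4 → ℝ) (n : ℕ) (ψ : V4 → ℝ) : Prop :=
  ∀ t : ℝ, ∀ m ∈ symTriples n, energyIntegrable M a X (symOp a m ψ) t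

/-! Transformed (tortoise-coordinate) quantities. -/

/-- Tortoise coordinate: dr/dr_* = Δ/(r²+a²), r_*(3M) = 0. -/
def rstar (M a r : ℝ) : ℝ := ∫ s in (3 * M)..r, (s ^ 2 + a ^ 2) / Δk M a s

/-- Ñ² where Ñ⁻² = 1 − a² sin²θ Δ/(r²+a²)². -/
def Ntilde2 (M a r θ : ℝ) : ℝ :=
  (1 - a ^ 2 * Real.sin θ ^ 2 * Δk M a r / (r ^ 2 + a ^ 2) ^ 2)⁻¹

def VQ (M a r : ℝ) : ℝ := Δk M a r / (r ^ 2 + a ^ 2) ^ 2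

/-- The potential V of the transformed wave equation. -/
def Vpot (M a r : ℝ) : ℝ :=
  Δk M a r * (2 * M * r ^ 3 + r ^ 2 * a ^ 2 - 4 * M * r * a ^ 2 + a ^ 4) / (r ^ 2 + a ^ 2) ^ 4

/-- Partial derivatives in the (t, r_*, θ, φ) coordinates, acting on functions
parameterized by BL coordinates; ∂_{r_*} = (Δ/(r²+a²)) ∂_r. -/
def tpd (M a : ℝ) (i : Fin 4) (u : V4 → ℝ) : V4 → ℝ :=
  fun x => if i = 1 then Δk M a (x 1) / (x 1 ^ 2 + a ^ 2) * pd 1 u x else pd i u x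

/-- G̃^{αβ} = (ΣΔ/(r²+a²)²) g^{αβ} in (t, r_*, θ, φ) coordinates. -/
def Gtilde (M a r θ : ℝ) : Matrix (Fin 4) (Fin 4) ℝ :=
  !![-(PiK M a r θ) / (r ^ 2 + a ^ 2) ^ 2, 0, 0, -(2 * a * M * r) / (r ^ 2 + a ^ 2) ^ 2;
     0, 1, 0, 0;
     0, 0, VQ M a r, 0;
     -(2 * a * M * r) / (r ^ 2 + a ^ 2) ^ 2, 0, 0,
       (Δk M a r - a ^ 2 * Real.sin θ ^ 2) / ((r ^ 2 + a ^ 2) ^ 2 * Real.sin θ ^ 2)]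

/-- The transformed momentum P̃^α_{(X,q)}[ũ]. -/
def tmomentum (M a : ℝ) (X : V4 → Fin 4 → ℝ) (q : V4 → ℝ) (u : V4 → ℝ) (α : Fin 4) :
    V4 → ℝ :=
  fun x =>
    -(∑ γ, Gtilde M a (x 1) (x 2) α γ * tpd M a γ u x) * (∑ β, tpd M a β u x * X x β) +
      (1 / 2) * X x α *
        ((∑ ρ, ∑ σ, Gtilde M a (x 1) (x 2) ρ σ * tpd M a ρ u x * tpd M a σ u x) +
          Vpot M a (x 1) * u x ^ 2) +
      ∑ β, Gtilde M a (x 1) (x 2) α β *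
        (-(q x) * tpd M a β u x * u x + (1 / 2) * tpd M a β q x * u x ^ 2)

/-- The transformed energy Ẽ_{(X,q)}[ũ](t) = ∫ P̃^t sinθ dr_* dθ dφ (as an r-integral). -/
def tenergy (M a : ℝ) (X : V4 → Fin 4 → ℝ) (q : V4 → ℝ) (u : V4 → ℝ) (t : ℝ) : ℝ :=
  ∫ p in sliceSet M a,
    tmomentum M a X q u 0 (pt t p) * Real.sin p.2.1 * ((p.1 ^ 2 + a ^ 2) / Δk M a p.1)

def zeroFn : V4 → ℝ := fun _ => 0

def tenergyUpTo (M a : ℝ) (X : V4 → Fin 4 → ℝ) (q : V4 → ℝ) (n : ℕ) (u : V4 → ℝ)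
    (t : ℝ) : ℝ :=
  ∑ m ∈ symTriples n, tenergy M a X q (symOp a m u) t

def tenergyIntegrable (M a : ℝ) (X : V4 → Fin 4 → ℝ) (q : V4 → ℝ) (u : V4 → ℝ)
    (t : ℝ) : Prop :=
  IntegrableOn
    (fun p => tmomentum M a X q u 0 (pt t p) * Real.sin p.2.1 * ((p.1 ^ 2 + a ^ 2) / Δk M a p.1))
    (sliceSet M a)

def tenergyFiniteUpTo (M a : ℝ) (X : V4 → Fin 4 → ℝ) (q : V4 → ℝ) (n : ℕ)
    (u : V4 → ℝ) : Prop :=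
  ∀ t : ℝ, ∀ m ∈ symTriples n, tenergyIntegrable M a X q (symOp a m u) t

/-- The vector field K = (t² + r_*² + 1) T_χ + 2 t r_* Ñ² ∂_{r_*}, in tilde coordinates. -/
def Kvec (M a : ℝ) (χ : ℝ → ℝ) : V4 → Fin 4 → ℝ :=
  fun x =>
    ![x 0 ^ 2 + rstar M a (x 1) ^ 2 + 1,
      2 * x 0 * rstar M a (x 1) * Ntilde2 M a (x 1) (x 2),
      0,
      (x 0 ^ 2 + rstar M a (x 1) ^ 2 + 1) * (χ (x 1) * ωH M a)]

def qK (M a : ℝ) : V4 → ℝ := fun x => x 0 * (Ntilde2 M a (x 1) (x 2) - 1)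

/-- T_⊥ = ∂_t + (2aMr/Π) ∂_φ. -/
def Tperp (M a : ℝ) : V4 → Fin 4 → ℝ :=
  fun x => ![1, 0, 0, 2 * a * M * x 1 / PiK M a (x 1) (x 2)]

/-- The future unit normal n = (Π/(ΣΔ))^{1/2} T_⊥ of the constant-t slices. -/
def normalVF (M a : ℝ) : V4 → Fin 4 → ℝ :=
  fun x i =>
    Real.sqrt (PiK M a (x 1) (x 2) / (SigK a (x 1) (x 2) * Δk M a (x 1))) * Tperp M a x i

/-- ũ = √(r² + a²) ψ. -/
def utilde (a : ℝ) (ψ : V4 → ℝ) : V4 → ℝ := fun x => Real.sqrt (x 1 ^ 2 + a ^ 2) * ψ x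

/-- The transformed wave operator ∂_{r_*}² + (r²+a²)⁻² ℛ − V. -/
def tbox (M a : ℝ) (u : V4 → ℝ) : V4 → ℝ :=
  fun x =>
    tpd M a 1 (tpd M a 1 u) x + ((x 1 ^ 2 + a ^ 2) ^ 2)⁻¹ * curlyR M a u x -
      Vpot M a (x 1) * u x

def IsTWaveSol (M a : ℝ) (u : V4 → ℝ) : Prop :=
  ContDiffOn ℝ (⊤ : ℕ∞) u (ext M a) ∧ ∀ x ∈ ext M a, tbox M a u x = 0

/-- The Kerr metric (lower indices) in BL coordinates. -/
def gBL (M a r θ : ℝ) : Matrix (Fin 4) (Fin 4) ℝ :=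
  !![-(1 - 2 * M * r / SigK a r θ), 0, 0, -(2 * a * M * r * Real.sin θ ^ 2 / SigK a r θ);
     0, SigK a r θ / Δk M a r, 0, 0;
     0, 0, SigK a r θ, 0;
     -(2 * a * M * r * Real.sin θ ^ 2 / SigK a r θ), 0, 0,
       PiK M a r θ * Real.sin θ ^ 2 / SigK a r θ]

/-- The Kerr metric (lower indices) in (t, r_*, θ, φ) coordinates. -/
def gTl (M a r θ : ℝ) : Matrix (Fin 4) (Fin 4) ℝ :=
  !![-(1 - 2 * M * r / SigK a r θ), 0, 0, -(2 * a * M * r * Real.sin θ ^ 2 / SigK a r θ);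
     0, SigK a r θ * Δk M a r / (r ^ 2 + a ^ 2) ^ 2, 0, 0;
     0, 0, SigK a r θ, 0;
     -(2 * a * M * r * Real.sin θ ^ 2 / SigK a r θ), 0, 0,
       PiK M a r θ * Real.sin θ ^ 2 / SigK a r θ]

def quadForm (g : Matrix (Fin 4) (Fin 4) ℝ) (X Y : Fin 4 → ℝ) : ℝ :=
  ∑ i, ∑ j, g i j * X i * Y j

/-! Null geodesics. -/

def gBLinv (M a r θ : ℝ) : Matrix (Fin 4) (Fin 4) ℝ := (SigK a r θ)⁻¹ • Ginv M a r θ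

def vel (γ : ℝ → V4) (s : ℝ) (i : Fin 4) : ℝ := deriv (fun u => γ u i) s

def christoffel (M a : ℝ) (x : V4) (k i j : Fin 4) : ℝ :=
  (1 / 2) * ∑ l, gBLinv M a (x 1) (x 2) k l *
    (pd i (fun y => gBL M a (y 1) (y 2) l j) x + pd j (fun y => gBL M a (y 1) (y 2) l i) x -
      pd l (fun y => gBL M a (y 1) (y 2) i j) x)

/-- r admits an orbiting null geodesic: there is a (nonconstant) null geodesic of the Kerr
metric remaining at that constant value of r in the exterior region. -/
def IsOrbitingNullGeodesicRadius (M a r : ℝ) : Prop :=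
  ∃ γ : ℝ → V4,
    (∀ i, ContDiff ℝ (⊤ : ℕ∞) fun s => γ s i) ∧ (∀ s, γ s ∈ ext M a) ∧ (∀ s, γ s 1 = r) ∧
      (∃ s i, vel γ s i ≠ 0) ∧
      (∀ s, quadForm (gBL M a (γ s 1) (γ s 2)) (vel γ s) (vel γ s) = 0) ∧
      ∀ s k, deriv (fun u => vel γ u k) s +
        ∑ i, ∑ j, christoffel M a (γ s) k i j * vel γ s i * vel γ s j = 0

/-! Morawetz (symmetry-indexed) quantities. -/

/-- Coefficients ℛ^a of ℛ in the basis 𝕊₂ = {∂_t², ∂_t∂_φ, ∂_φ², Q}. -/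
def Rcoef (M a r : ℝ) : Fin 4 → ℝ :=
  ![-((r ^ 2 + a ^ 2) ^ 2), -(4 * a * M * r), Δk M a r - a ^ 2, Δk M a r]

/-- Coefficients ℒ^a of ℒ = ∂_t² + ∂_φ² + Q in the basis 𝕊₂. -/
def Lcoef : Fin 4 → ℝ := ![1, 0, 1, 1]

/-- The second-order symmetry operators S_a ∈ 𝕊₂. -/
def symS (a : ℝ) (c : Fin 4) (ψ : V4 → ℝ) : V4 → ℝ :=
  if c = 0 then pd 0 (pd 0 ψ)
  else if c = 1 then pd 0 (pd 3 ψ)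
  else if c = 2 then pd 3 (pd 3 ψ)
  else carterQ a ψ

/-- The coefficient matrices S_a^{αβ} with S_a = μ⁻¹ ∂_α (μ S_a^{αβ} ∂_β). -/
def Smat (a : ℝ) (c : Fin 4) (θ : ℝ) : Matrix (Fin 4) (Fin 4) ℝ :=
  if c = 0 then !![1, 0, 0, 0; 0, 0, 0, 0; 0, 0, 0, 0; 0, 0, 0, 0]
  else if c = 1 then !![0, 0, 0, 1 / 2; 0, 0, 0, 0; 0, 0, 0, 0; 1 / 2, 0, 0, 0]
  else if c = 2 then !![0, 0, 0, 0; 0, 0, 0, 0; 0, 0, 0, 0; 0, 0, 0, 1]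
  else
    !![a ^ 2 * Real.sin θ ^ 2, 0, 0, 0; 0, 0, 0, 0; 0, 0, 1, 0;
       0, 0, 0, Real.cos θ ^ 2 / Real.sin θ ^ 2]

/-- ℒ^{αβ} = Σ_c ℒ^c S_c^{αβ}. -/
def Lmat (a : ℝ) (θ : ℝ) : Matrix (Fin 4) (Fin 4) ℝ :=
  fun α β => ∑ c, Lcoef c * Smat a c θ α β

/-- ℛ̃′^a = ∂_r (z₁ Δ⁻¹ ℛ^a). -/
def Rtp (M a : ℝ) (z₁ : ℝ → ℝ) (c : Fin 4) (r : ℝ) : ℝ :=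
  deriv (fun s => z₁ s * (Δk M a s)⁻¹ * Rcoef M a s c) r

/-- ℛ̃̃″^a = ∂_r (z₂ z₁^{1/2} Δ^{−1/2} ℛ̃′^a). -/
def Rtpp (M a : ℝ) (z₁ z₂ : ℝ → ℝ) (c : Fin 4) (r : ℝ) : ℝ :=
  deriv (fun s => z₂ s * Real.sqrt (z₁ s) * (Real.sqrt (Δk M a s))⁻¹ * Rtp M a z₁ c s) r

/-- 𝒜^a = z₁^{1/2} Δ^{3/2} (−ℛ̃̃″^a). -/
def Acoef (M a : ℝ) (z₁ z₂ : ℝ → ℝ) (c : Fin 4) (r : ℝ) : ℝ :=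
  Real.sqrt (z₁ r) * (Δk M a r * Real.sqrt (Δk M a r)) * (-(Rtpp M a z₁ z₂ c r))

/-- 𝒰^{cd} = (1/2) z₂ ℛ̃′^c ℛ̃′^d. -/
def Ucoef (M a : ℝ) (z₁ z₂ : ℝ → ℝ) (c d : Fin 4) (r : ℝ) : ℝ :=
  (1 / 2) * z₂ r * Rtp M a z₁ c r * Rtp M a z₁ d r

/-- 𝒱^a = (1/4) ∂_r (Δ ∂_r (z₁ ∂_r (z₂ ℛ̃′^a))). -/
def Vcoef (M a : ℝ) (z₁ z₂ : ℝ → ℝ) (c : Fin 4) (r : ℝ) : ℝ :=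
  (1 / 4) *
    deriv (fun s =>
      Δk M a s * deriv (fun w => z₁ w * deriv (fun v => z₂ v * Rtp M a z₁ c v) w) s) r

/-- The r-component of the Morawetz vector field A^{ab} = z₁ z₂ ℛ̃′^{(a} ℒ^{b)} ∂_r. -/
def AvecR (M a : ℝ) (z₁ z₂ : ℝ → ℝ) (i j : Fin 4) (r : ℝ) : ℝ :=
  z₁ r * z₂ r * ((1 / 2) * (Rtp M a z₁ i r * Lcoef j + Rtp M a z₁ j r * Lcoef i))

/-- The Morawetz scalars q_A^{ab}. -/
def qA (M a : ℝ) (z₁ z₂ : ℝ → ℝ) (i j : Fin 4) (r : ℝ) : ℝ :=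
  (1 / 2) * deriv (AvecR M a z₁ z₂ i j) r -
    (1 / 2) * deriv z₁ r * z₂ r *
      ((1 / 2) * (Rtp M a z₁ i r * Lcoef j + Rtp M a z₁ j r * Lcoef i))

/-- The symmetry-indexed Morawetz momentum P_A^α[ψ]. -/
def morMomentum (M a : ℝ) (z₁ z₂ : ℝ → ℝ) (ψ : V4 → ℝ) (α : Fin 4) : V4 → ℝ :=
  fun x => ∑ i, ∑ j,
    (-(∑ γ, Ginv M a (x 1) (x 2) α γ * pd γ (symS a i ψ) x) * pd 1 (symS a j ψ) x *
        AvecR M a z₁ z₂ i j (x 1) +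
      (1 / 2) * (if α = 1 then AvecR M a z₁ z₂ i j (x 1) else 0) *
        (∑ ρ, ∑ σ, Ginv M a (x 1) (x 2) ρ σ * pd ρ (symS a i ψ) x * pd σ (symS a j ψ) x) +
      ∑ β, Ginv M a (x 1) (x 2) α β *
        (-(qA M a z₁ z₂ i j (x 1)) * pd β (symS a i ψ) x * symS a j ψ x +
          (1 / 2) * pd β (fun y => qA M a z₁ z₂ i j (y 1)) x * symS a i ψ x * symS a j ψ x))

/-- The first boundary current P∂₁^α[ψ]. -/
def morBoundary1 (M a : ℝ) (z₁ z₂ : ℝ → ℝ) (ψ : V4 → ℝ) (α : Fin 4) : V4 → ℝ :=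
  fun x => ∑ i, ∑ j, ∑ β,
    (Ucoef M a z₁ z₂ i j (x 1) * Lmat a (x 2) α β -
        ∑ c, (1 / 2) *
          (Ucoef M a z₁ z₂ c i (x 1) * Lcoef j + Ucoef M a z₁ z₂ c j (x 1) * Lcoef i) *
          Smat a c (x 2) α β) *
      symS a i ψ x * pd β (symS a j ψ) x

/-! Surface energies. -/

def pdR (f : ℝ × ℝ × ℝ → ℝ) (p : ℝ × ℝ × ℝ) : ℝ := deriv (fun s => f (s, p.2)) p.1

def pdTh (f : ℝ × ℝ × ℝ → ℝ) (p : ℝ × ℝ × ℝ) : ℝ :=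
  deriv (fun s => f (p.1, s, p.2.2)) p.2.1

def pdPh (f : ℝ × ℝ × ℝ → ℝ) (p : ℝ × ℝ × ℝ) : ℝ :=
  deriv (fun s => f (p.1, p.2.1, s)) p.2.2

/-- Flux of the transformed momentum through the graph t = f(r_*, θ, φ)
(f given as a function of (r, θ, φ), with ∂_{r_*} f = (Δ/(r²+a²)) ∂_r f). -/
def tsurfEnergy (M a : ℝ) (X : V4 → Fin 4 → ℝ) (q : V4 → ℝ) (u : V4 → ℝ)
    (f : ℝ × ℝ × ℝ → ℝ) : ℝ :=
  ∫ p in sliceSet M a,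
    (tmomentum M a X q u 0 (pt (f p) p) -
        Δk M a p.1 / (p.1 ^ 2 + a ^ 2) * pdR f p * tmomentum M a X q u 1 (pt (f p) p) -
        pdTh f p * tmomentum M a X q u 2 (pt (f p) p) -
        pdPh f p * tmomentum M a X q u 3 (pt (f p) p)) *
      Real.sin p.2.1 * ((p.1 ^ 2 + a ^ 2) / Δk M a p.1)

def tsurfEnergyIntegrable (M a : ℝ) (X : V4 → Fin 4 → ℝ) (q : V4 → ℝ) (u : V4 → ℝ)
    (f : ℝ × ℝ × ℝ → ℝ) : Prop :=
  IntegrableOn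
    (fun p =>
      (tmomentum M a X q u 0 (pt (f p) p) -
          Δk M a p.1 / (p.1 ^ 2 + a ^ 2) * pdR f p * tmomentum M a X q u 1 (pt (f p) p) -
          pdTh f p * tmomentum M a X q u 2 (pt (f p) p) -
          pdPh f p * tmomentum M a X q u 3 (pt (f p) p)) *
        Real.sin p.2.1 * ((p.1 ^ 2 + a ^ 2) / Δk M a p.1))
    (sliceSet M a)


/-- The transformed energy-momentum tensor 𝒯̃[ũ]^α{}_β. -/
def tStress (M a : ℝ) (u : V4 → ℝ) (α β : Fin 4) : V4 → ℝ :=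
  fun x =>
    -(∑ γ, Gtilde M a (x 1) (x 2) α γ * tpd M a γ u x) * tpd M a β u x +
      (1 / 2) * (if α = β then 1 else 0) *
        ((∑ ρ, ∑ σ, Gtilde M a (x 1) (x 2) ρ σ * tpd M a ρ u x * tpd M a σ u x) +
          Vpot M a (x 1) * u x ^ 2)

/-! ### The dominant energy condition in Minkowski space -/

/-- Cauchy–Schwarz for the spatial parts of two future causal vectors; it says that their Minkowski
product is nonpositive. -/
lemma causal_pair {a b x1 x2 x3 y1 y2 y3 : ℝ} (ha : 0 ≤ a) (hb : 0 ≤ b)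
    (hx : x1 ^ 2 + x2 ^ 2 + x3 ^ 2 ≤ a ^ 2) (hy : y1 ^ 2 + y2 ^ 2 + y3 ^ 2 ≤ b ^ 2) :
    |x1 * y1 + x2 * y2 + x3 * y3| ≤ a * b := by
  apply abs_le_of_sq_le_sq _ (mul_nonneg ha hb)
  have h1 : (x1 ^ 2 + x2 ^ 2 + x3 ^ 2) * (y1 ^ 2 + y2 ^ 2 + y3 ^ 2) ≤ a ^ 2 * b ^ 2 :=
    mul_le_mul hx hy (by positivity) (by positivity)
  nlinarith [sq_nonneg (x1 * y2 - x2 * y1), sq_nonneg (x1 * y3 - x3 * y1),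
    sq_nonneg (x2 * y3 - x3 * y2)]

/-- The dominant energy condition of the massless scalar field in Minkowski space, for future
causal vectors `x`, `y` and a covector `d`. -/
lemma minkowski_dec {x0 x1 x2 x3 y0 y1 y2 y3 : ℝ} (d0 d1 d2 d3 : ℝ) (hx0 : 0 ≤ x0) (hy0 : 0 ≤ y0)
    (hx : x1 ^ 2 + x2 ^ 2 + x3 ^ 2 ≤ x0 ^ 2) (hy : y1 ^ 2 + y2 ^ 2 + y3 ^ 2 ≤ y0 ^ 2) :
    0 ≤ (x0 * d0 + x1 * d1 + x2 * d2 + x3 * d3) * (y0 * d0 + y1 * d1 + y2 * d2 + y3 * d3) -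
      (1 / 2) * (-(x0 * y0) + x1 * y1 + x2 * y2 + x3 * y3) *
        (-d0 ^ 2 + d1 ^ 2 + d2 ^ 2 + d3 ^ 2) := by
  obtain ⟨p, hp⟩ : ∃ p, p = x0 * d0 + x1 * d1 + x2 * d2 + x3 * d3 := ⟨_, rfl⟩
  obtain ⟨m, hm⟩ : ∃ m, m = -d0 ^ 2 + d1 ^ 2 + d2 ^ 2 + d3 ^ 2 := ⟨_, rfl⟩
  rw [← hp, ← hm]
  -- `v` is the covector `(xd) d - ½ η(x,·) η⁻¹(d,d)`.
  obtain ⟨v0, hv0⟩ : ∃ v, v = p * d0 + (1 / 2) * x0 * m := ⟨_, rfl⟩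
  obtain ⟨v1, hv1⟩ : ∃ v, v = p * d1 - (1 / 2) * x1 * m := ⟨_, rfl⟩
  obtain ⟨v2, hv2⟩ : ∃ v, v = p * d2 - (1 / 2) * x2 * m := ⟨_, rfl⟩
  obtain ⟨v3, hv3⟩ : ∃ v, v = p * d3 - (1 / 2) * x3 * m := ⟨_, rfl⟩
  have hnorm : v1 ^ 2 + v2 ^ 2 + v3 ^ 2 - v0 ^ 2 =
      (1 / 4) * m ^ 2 * (x1 ^ 2 + x2 ^ 2 + x3 ^ 2 - x0 ^ 2) := by
    rw [hv0, hv1, hv2, hv3]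
    linear_combination (-p ^ 2) * hm + p * m * hp
  have hv : v1 ^ 2 + v2 ^ 2 + v3 ^ 2 ≤ v0 ^ 2 := by
    nlinarith [mul_nonneg (sq_nonneg m) (sub_nonneg.2 hx)]
  have hv0nn : 0 ≤ v0 := by
    have e : 0 ≤ Real.sqrt (d1 ^ 2 + d2 ^ 2 + d3 ^ 2) := Real.sqrt_nonneg _
    have e2 : Real.sqrt (d1 ^ 2 + d2 ^ 2 + d3 ^ 2) ^ 2 = d1 ^ 2 + d2 ^ 2 + d3 ^ 2 :=
      Real.sq_sqrt (by positivity)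
    set n := Real.sqrt (d1 ^ 2 + d2 ^ 2 + d3 ^ 2)
    have hc := causal_pair hx0 e hx e2.ge
    have h1 : |d0 * (x1 * d1 + x2 * d2 + x3 * d3)| ≤ |d0| * (x0 * n) := by
      rw [abs_mul]; exact mul_le_mul_of_nonneg_left hc (abs_nonneg _)
    have h2 := (abs_le.1 h1).1
    have h3 : v0 = (1 / 2) * x0 * (|d0| ^ 2 + n ^ 2) + d0 * (x1 * d1 + x2 * d2 + x3 * d3) := by
      rw [hv0, hp, hm, e2, sq_abs]; ring
    rw [h3]
    nlinarith [mul_nonneg hx0 (sq_nonneg (|d0| - n))]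
  have hc := (abs_le.1 (causal_pair hv0nn hy0 hv hy)).1
  have : p * (y0 * d0 + y1 * d1 + y2 * d2 + y3 * d3) -
      (1 / 2) * (-(x0 * y0) + x1 * y1 + x2 * y2 + x3 * y3) * m =
      v0 * y0 + (v1 * y1 + v2 * y2 + v3 * y3) := by
    rw [hv0, hv1, hv2, hv3]; ring
  rw [this]; linarith

/-- The previous lemma in a frame that is orthogonal but not normalized, the metric being
`diag(-k0, k1, k2, k3)`, together with a nonnegative zeroth-order term `W`. -/
lemma diagonal_dec {k0 k1 k2 k3 x0 x1 x2 x3 y0 y1 y2 y3 W : ℝ} (d0 d1 d2 d3 : ℝ)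
    (hk0 : 0 < k0) (hk1 : 0 < k1) (hk2 : 0 < k2) (hk3 : 0 < k3) (hW : 0 ≤ W)
    (hx0 : 0 ≤ x0) (hy0 : 0 ≤ y0)
    (hx : -k0 * x0 ^ 2 + k1 * x1 ^ 2 + k2 * x2 ^ 2 + k3 * x3 ^ 2 ≤ 0)
    (hy : -k0 * y0 ^ 2 + k1 * y1 ^ 2 + k2 * y2 ^ 2 + k3 * y3 ^ 2 ≤ 0) :
    0 ≤ (x0 * d0 + x1 * d1 + x2 * d2 + x3 * d3) * (y0 * d0 + y1 * d1 + y2 * d2 + y3 * d3) -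
      (1 / 2) * (-k0 * (x0 * y0) + k1 * (x1 * y1) + k2 * (x2 * y2) + k3 * (x3 * y3)) *
        (-(d0 ^ 2 / k0) + d1 ^ 2 / k1 + d2 ^ 2 / k2 + d3 ^ 2 / k3 + W) := by
  obtain ⟨s0, h0, rfl⟩ : ∃ s, 0 < s ∧ k0 = s ^ 2 :=
    ⟨_, Real.sqrt_pos.2 hk0, (Real.sq_sqrt hk0.le).symm⟩
  obtain ⟨s1, h1, rfl⟩ : ∃ s, 0 < s ∧ k1 = s ^ 2 :=
    ⟨_, Real.sqrt_pos.2 hk1, (Real.sq_sqrt hk1.le).symm⟩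
  obtain ⟨s2, h2, rfl⟩ : ∃ s, 0 < s ∧ k2 = s ^ 2 :=
    ⟨_, Real.sqrt_pos.2 hk2, (Real.sq_sqrt hk2.le).symm⟩
  obtain ⟨s3, h3, rfl⟩ : ∃ s, 0 < s ∧ k3 = s ^ 2 :=
    ⟨_, Real.sqrt_pos.2 hk3, (Real.sq_sqrt hk3.le).symm⟩
  have hX : (s1 * x1) ^ 2 + (s2 * x2) ^ 2 + (s3 * x3) ^ 2 ≤ (s0 * x0) ^ 2 := by linarith
  have hY : (s1 * y1) ^ 2 + (s2 * y2) ^ 2 + (s3 * y3) ^ 2 ≤ (s0 * y0) ^ 2 := by linarith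
  have hX0 : 0 ≤ s0 * x0 := by positivity
  have hY0 : 0 ≤ s0 * y0 := by positivity
  have key := minkowski_dec (d0 / s0) (d1 / s1) (d2 / s2) (d3 / s3) hX0 hY0 hX hY
  have hc := (abs_le.1 (causal_pair hX0 hY0 hX hY)).2
  have cancel : ∀ s x d : ℝ, 0 < s → s * x * (d / s) = x * d := fun s x d hs => by
    field_simp
  rw [cancel _ _ _ h0, cancel _ _ _ h0, cancel _ _ _ h1, cancel _ _ _ h1, cancel _ _ _ h2,
    cancel _ _ _ h2, cancel _ _ _ h3, cancel _ _ _ h3, div_pow, div_pow, div_pow, div_pow] at key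
  nlinarith [mul_nonneg hW (sub_nonneg.2 hc)]

/-! ### The Kerr geometry at a point of the exterior region -/

/-- The determinant identity of the `(t, φ)` block of the Kerr metric. -/
lemma blockIdentity (M a r θ : ℝ) :
    PiK M a r θ * (Δk M a r - a ^ 2 * Real.sin θ ^ 2) + (2 * a * M * r) ^ 2 * Real.sin θ ^ 2 =
      SigK a r θ ^ 2 * Δk M a r := by
  have h : Real.cos θ ^ 2 = 1 - Real.sin θ ^ 2 := by linarith [Real.sin_sq_add_cos_sq θ]
  simp only [PiK, SigK, Δk, h]; ring

/-- The lower bound and the quadratic equation satisfied by `r₊`. -/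
lemma rplus_facts {M a : ℝ} (hM : 0 < M) (ha : |a| < M / 1000) :
    M ≤ rplus M a ∧ rplus M a ^ 2 + a ^ 2 = 2 * M * rplus M a := by
  have h1 : a ^ 2 ≤ M ^ 2 := by
    apply sq_le_sq'
    · linarith [(abs_lt.1 ha).1]
    · linarith [(abs_lt.1 ha).2]
  have h2 := Real.sq_sqrt (sub_nonneg.2 h1)
  have h3 := Real.sqrt_nonneg (M ^ 2 - a ^ 2)
  unfold rplus
  constructor
  · linarith
  · nlinarith

/-- Elementary size bounds for the Kerr coefficients when `|a| < M/1000`, outside the horizon. -/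
lemma kerr_bounds {M a r : ℝ} (θ : ℝ) (hM : 0 < M) (ha : |a| < M / 1000) (hr : rplus M a < r) :
    M < r ∧ a ^ 2 ≤ M ^ 2 / 1000000 ∧ (r - rplus M a) ^ 2 ≤ Δk M a r ∧ 0 < Δk M a r ∧
      Δk M a r ≤ r ^ 2 ∧ (r ^ 2 + a ^ 2) ^ 2 / 2 ≤ PiK M a r θ ∧
      PiK M a r θ ≤ (r ^ 2 + a ^ 2) ^ 2 ∧ 0 ≤ Vpot M a r ∧ 0 < SigK a r θ ∧
      PiK M a r θ ≤ 2 * SigK a r θ ^ 2 := by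
  obtain ⟨hp, hp2⟩ := rplus_facts hM ha
  set p := rplus M a
  have hMr : M < r := by linarith
  have hr0 : 0 < r := by linarith
  have ha2 : a ^ 2 ≤ M ^ 2 / 1000000 := by
    have : a ^ 2 ≤ (M / 1000) ^ 2 := sq_le_sq' (by linarith [(abs_lt.1 ha).1])
      (by linarith [(abs_lt.1 ha).2])
    linarith
  have hMr2 : M ^ 2 < r ^ 2 := by nlinarith
  have hΔ : Δk M a r = (r - p) * (r + p - 2 * M) := by unfold Δk; linear_combination hp2
  have h3 : (r - p) ^ 2 ≤ Δk M a r := by rw [hΔ]; nlinarith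
  have h4 : 0 < Δk M a r := lt_of_lt_of_le (by have := sub_pos.2 hr; positivity) h3
  have h5 : Δk M a r ≤ r ^ 2 := by unfold Δk; nlinarith
  have hs0 := sq_nonneg (Real.sin θ)
  have hs1 := Real.sin_sq_le_one θ
  have hc0 := sq_nonneg (Real.cos θ)
  have ha0 := sq_nonneg a
  have hP1 : PiK M a r θ ≤ (r ^ 2 + a ^ 2) ^ 2 := by
    unfold PiK
    have : 0 ≤ a ^ 2 * Real.sin θ ^ 2 * Δk M a r := by positivity
    linarith
  have hP0 : (r ^ 2 + a ^ 2) ^ 2 / 2 ≤ PiK M a r θ := by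
    have e1 : a ^ 2 * Real.sin θ ^ 2 * Δk M a r ≤ a ^ 2 * 1 * r ^ 2 := by gcongr
    have e2 : a ^ 2 * r ^ 2 ≤ r ^ 2 / 1000000 * r ^ 2 :=
      mul_le_mul_of_nonneg_right (by linarith) (sq_nonneg r)
    unfold PiK
    nlinarith [mul_nonneg ha0 (sq_nonneg r), sq_nonneg (a ^ 2)]
  have hSr : r ^ 2 ≤ SigK a r θ := by
    unfold SigK
    have : 0 ≤ a ^ 2 * Real.cos θ ^ 2 := by positivity
    linarith
  have hr2 : 0 < r ^ 2 := by positivity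
  refine ⟨hMr, ha2, h3, h4, h5, hP0, hP1, ?_, by linarith, ?_⟩
  · unfold Vpot
    have : 0 ≤ 2 * M * r ^ 3 + r ^ 2 * a ^ 2 - 4 * M * r * a ^ 2 + a ^ 4 := by
      have : 0 ≤ 2 * M * r * (r ^ 2 - 2 * a ^ 2) :=
        mul_nonneg (by positivity) (by nlinarith)
      nlinarith [mul_nonneg hr2.le ha0, sq_nonneg (a ^ 2)]
    positivity
  · have e1 : (r ^ 2 + a ^ 2) ^ 2 ≤ (r ^ 2 + r ^ 2 / 1000000) ^ 2 := by
      gcongr; linarith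
    have e2 : (r ^ 2) ^ 2 ≤ SigK a r θ ^ 2 := by gcongr
    nlinarith

/-! ### The shift `χ ω_H - ω` -/

/-- `ω_H - ω` is small compared with `√Δ/(r²+a²)` on bounded regions, down to the horizon. -/
lemma shift_inner {M a r : ℝ} (θ : ℝ) (hM : 0 < M) (ha : |a| < M / 1000) (hr : rplus M a < r)
    (hr' : r ≤ 11 * M) :
    |ωH M a - 2 * a * M * r / PiK M a r θ| ≤
      Real.sqrt (Δk M a r) / (4 * (r ^ 2 + a ^ 2)) := by
  obtain ⟨hMr, ha2, h3, h4, h5, hP0, hP1, -, -, -⟩ := kerr_bounds θ hM ha hr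
  obtain ⟨hp, hp2⟩ := rplus_facts hM ha
  have hr0 : 0 < r := by linarith
  have hq0 := Real.sqrt_nonneg (Δk M a r)
  have hq2 := Real.sq_sqrt h4.le
  have hs0 := sq_nonneg (Real.sin θ)
  have hs1 := Real.sin_sq_le_one θ
  have ha0 := sq_nonneg a
  have hqr : Real.sqrt (Δk M a r) ≤ r := Real.sqrt_le_iff.2 ⟨hr0.le, h5⟩
  have hpq : r - rplus M a ≤ Real.sqrt (Δk M a r) := Real.le_sqrt_of_sq_le h3
  set q := Real.sqrt (Δk M a r)
  set p := rplus M a with hpdef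
  set w := r ^ 2 + a ^ 2 with hw
  have hw0 : 0 < w := by positivity
  have hp0 : 0 < p := by linarith
  have hh0 : 0 < p ^ 2 + a ^ 2 := by positivity
  have hhM : M ^ 2 ≤ p ^ 2 + a ^ 2 := by nlinarith
  have hhw : p ^ 2 + a ^ 2 ≤ w := by rw [hw]; nlinarith
  have hPi : 0 < PiK M a r θ := lt_of_lt_of_le (by positivity) hP0
  -- The numerator of `ω_H - ω`, with the vanishing at the horizon made explicit.
  set N := w * ((r - p) * (r + p)) + (p ^ 2 + a ^ 2 - a ^ 2 * Real.sin θ ^ 2) * Δk M a r with hN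
  have hform : ωH M a - 2 * a * M * r / PiK M a r θ =
      a * N / ((p ^ 2 + a ^ 2) * PiK M a r θ) := by
    have e : a * N = a * PiK M a r θ - (p ^ 2 + a ^ 2) * (2 * a * M * r) := by
      rw [hN, hw]; unfold PiK Δk; ring
    rw [e, ωH, ← hpdef]
    field_simp
  have has : a ^ 2 * Real.sin θ ^ 2 ≤ a ^ 2 := mul_le_of_le_one_right ha0 hs1
  have has0 : 0 ≤ a ^ 2 * Real.sin θ ^ 2 := by positivity
  have hrp : 0 < r - p := sub_pos.2 hr
  have hN0 : 0 ≤ N := by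
    have e1 : 0 ≤ p ^ 2 + a ^ 2 - a ^ 2 * Real.sin θ ^ 2 := by linarith [sq_nonneg p]
    have e2 : 0 < r + p := by linarith
    exact add_nonneg (mul_nonneg hw0.le (mul_nonneg hrp.le e2.le)) (mul_nonneg e1 h4.le)
  have hN1 : N ≤ 3 * w * q * r := by
    have e1 : (r - p) * (r + p) ≤ q * (2 * r) :=
      mul_le_mul hpq (by linarith) (by linarith) hq0
    have e2 : (p ^ 2 + a ^ 2 - a ^ 2 * Real.sin θ ^ 2) * Δk M a r ≤ w * (q * r) := by
      apply mul_le_mul (by linarith) _ h4.le hw0.le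
      rw [← hq2, sq]
      exact mul_le_mul_of_nonneg_left hqr hq0
    have e3 := mul_le_mul_of_nonneg_left e1 hw0.le
    rw [hN]; linarith
  rw [hform, abs_div, abs_mul, abs_of_nonneg hN0,
    abs_of_pos (mul_pos hh0 hPi), div_le_div_iff₀ (mul_pos hh0 hPi) (by positivity)]
  have f1 : |a| * N ≤ M / 1000 * (3 * w * q * (11 * M)) := by
    apply mul_le_mul ha.le (hN1.trans _) hN0 (by positivity)
    gcongr
  have f2 : M ^ 2 * (w ^ 2 / 2) ≤ (p ^ 2 + a ^ 2) * PiK M a r θ :=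
    mul_le_mul hhM hP0 (by positivity) hh0.le
  have f3 := mul_le_mul_of_nonneg_left f2 hq0
  have f4 := mul_le_mul_of_nonneg_right f1 (by positivity : 0 ≤ 4 * w)
  have f5 : 0 ≤ q * (M ^ 2 * w ^ 2) := by positivity
  linarith

/-- The angular velocity `ω` of the constant-`t` slices is small compared with `√Δ/(r²+a²)` far
from the horizon. -/
lemma shift_outer {M a r : ℝ} (θ : ℝ) (hM : 0 < M) (ha : |a| < M / 1000) (hr : rplus M a < r)
    (hr' : 10 * M ≤ r) :
    |2 * a * M * r / PiK M a r θ| ≤ Real.sqrt (Δk M a r) / (4 * (r ^ 2 + a ^ 2)) := by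
  obtain ⟨hMr, ha2, h3, h4, h5, hP0, hP1, -, -, -⟩ := kerr_bounds θ hM ha hr
  have hr0 : 0 < r := by linarith
  have hq : r / 2 ≤ Real.sqrt (Δk M a r) := by
    apply Real.le_sqrt_of_sq_le
    unfold Δk; nlinarith [sq_nonneg a]
  set q := Real.sqrt (Δk M a r)
  have hPi : 0 < PiK M a r θ := lt_of_lt_of_le (by positivity) hP0
  have hwr : r ^ 2 ≤ r ^ 2 + a ^ 2 := by linarith [sq_nonneg a]
  set w := r ^ 2 + a ^ 2
  have hw0 : 0 < w := lt_of_lt_of_le (by positivity) hwr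
  rw [abs_div, abs_of_pos hPi, div_le_div_iff₀ hPi (by positivity)]
  have e : |2 * a * M * r| = 2 * |a| * M * r := by
    rw [abs_mul, abs_mul, abs_mul, abs_of_pos hr0, abs_of_pos hM, abs_of_pos (two_pos)]
  have f1 : 2 * |a| * M * r ≤ 2 * (r / 10000) * (r / 10) * r := by
    gcongr <;> linarith
  have f2 : r / 2 * (w ^ 2 / 2) ≤ q * PiK M a r θ :=
    mul_le_mul hq hP0 (by positivity) (by linarith)
  have f3 : r * (r ^ 2 * w) ≤ r * (w * w) := by gcongr
  have f4 := mul_le_mul_of_nonneg_right f1 (by positivity : 0 ≤ 4 * w)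
  have f5 : 0 ≤ r * (r ^ 2 * w) := by positivity
  rw [e]
  linarith

/-- The coefficient `δ = χ ω_H - ω` in `T_χ = T_⊥ + δ ∂_φ` is small compared with `√Ṽ_Q`, so the
cross term of the energy density can be absorbed. -/
lemma shift_abs_le {M a r : ℝ} (θ : ℝ) {χ : ℝ → ℝ} (hM : 0 < M) (hχ : IsCutoff M χ)
    (ha : |a| < M / 1000) (hr : rplus M a < r) :
    (χ r * ωH M a - 2 * a * M * r / PiK M a r θ) ^ 2 ≤ VQ M a r / 16 := by
  obtain ⟨-, -, -, h4, -, -, -, -, -, -⟩ := kerr_bounds θ hM ha hr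
  obtain ⟨-, hanti, hone, hzero⟩ := hχ
  have key : |χ r * ωH M a - 2 * a * M * r / PiK M a r θ| ≤
      Real.sqrt (Δk M a r) / (4 * (r ^ 2 + a ^ 2)) := by
    rcases le_total r (10 * M) with h | h
    · rw [hone r h, one_mul]
      exact shift_inner θ hM ha hr (by linarith)
    rcases le_total (11 * M) r with h' | h'
    · rw [hzero r h', zero_mul, zero_sub, abs_neg]
      exact shift_outer θ hM ha hr h
    · have c1 : χ r ≤ 1 := by rw [← hone (10 * M) le_rfl]; exact hanti h
      have c0 : 0 ≤ χ r := by rw [← hzero (11 * M) le_rfl]; exact hanti h'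
      have i1 := shift_inner θ hM ha hr h'
      have i2 := shift_outer θ hM ha hr h
      set ω := 2 * a * M * r / PiK M a r θ
      set B := Real.sqrt (Δk M a r) / (4 * (r ^ 2 + a ^ 2))
      calc |χ r * ωH M a - ω| = |χ r * (ωH M a - ω) + -((1 - χ r) * ω)| := by congr 1; ring
        _ ≤ |χ r * (ωH M a - ω)| + |-((1 - χ r) * ω)| := abs_add_le _ _
        _ = χ r * |ωH M a - ω| + (1 - χ r) * |ω| := by
          rw [abs_neg, abs_mul, abs_mul, abs_of_nonneg c0, abs_of_nonneg (sub_nonneg.2 c1)]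
        _ ≤ χ r * B + (1 - χ r) * B :=
          add_le_add (mul_le_mul_of_nonneg_left i1 c0)
            (mul_le_mul_of_nonneg_left i2 (sub_nonneg.2 c1))
        _ = B := by ring
  calc (χ r * ωH M a - 2 * a * M * r / PiK M a r θ) ^ 2
      ≤ (Real.sqrt (Δk M a r) / (4 * (r ^ 2 + a ^ 2))) ^ 2 := sq_le_sq.2 (key.trans (le_abs_self _))
    _ = VQ M a r / 16 := by
      rw [div_pow, Real.sq_sqrt h4.le, VQ, mul_pow, div_div]
      ring

/-! ### Diagonalization of the metric and of its inverse -/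

/-- The metric is diagonal in the frame `(T_⊥, ∂_{r_*}, ∂_θ, ∂_φ)`. -/
lemma gTl_eq {M a r θ : ℝ} (hSig : 0 < SigK a r θ) (hPi : 0 < PiK M a r θ) (X Y : Fin 4 → ℝ) :
    quadForm (gTl M a r θ) X Y =
      -(SigK a r θ * Δk M a r / PiK M a r θ) * (X 0 * Y 0) +
        SigK a r θ * Δk M a r / (r ^ 2 + a ^ 2) ^ 2 * (X 1 * Y 1) + SigK a r θ * (X 2 * Y 2) +
        PiK M a r θ * Real.sin θ ^ 2 / SigK a r θ *
          ((X 3 - 2 * a * M * r / PiK M a r θ * X 0) *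
            (Y 3 - 2 * a * M * r / PiK M a r θ * Y 0)) := by
  have id := blockIdentity M a r θ
  have h : Real.cos θ ^ 2 = 1 - Real.sin θ ^ 2 := by linarith [Real.sin_sq_add_cos_sq θ]
  have tt : -(1 - 2 * M * r / SigK a r θ) = -(SigK a r θ * Δk M a r / PiK M a r θ) +
      PiK M a r θ * Real.sin θ ^ 2 / SigK a r θ * (2 * a * M * r / PiK M a r θ) ^ 2 := by
    field_simp
    have e : SigK a r θ - 2 * M * r = Δk M a r - a ^ 2 * Real.sin θ ^ 2 := by
      simp only [SigK, Δk, h]; ring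
    linear_combination -(PiK M a r θ) * e - id
  have tp : -(2 * a * M * r * Real.sin θ ^ 2 / SigK a r θ) =
      -(PiK M a r θ * Real.sin θ ^ 2 / SigK a r θ * (2 * a * M * r / PiK M a r θ)) := by
    field_simp
  simp only [quadForm, gTl, Fin.sum_univ_four]
  rw [tt, tp]
  simp [Matrix.of_apply, Matrix.cons_val]
  ring

/-- The quadratic form of `Gtilde` on covectors is diagonal in the dual frame: its `t`-`φ` part
is a combination of the squares of `d(T_⊥)` and `d(∂_φ)`. -/
lemma Gtilde_eq {M a r θ : ℝ} (hPi : 0 < PiK M a r θ) (hs : 0 < Real.sin θ)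
    (hw : 0 < r ^ 2 + a ^ 2) (d : Fin 4 → ℝ) :
    ∑ ρ, ∑ σ, Gtilde M a r θ ρ σ * d ρ * d σ =
      -(PiK M a r θ / (r ^ 2 + a ^ 2) ^ 2) * (d 0 + 2 * a * M * r / PiK M a r θ * d 3) ^ 2 +
        d 1 ^ 2 + VQ M a r * d 2 ^ 2 +
        SigK a r θ ^ 2 / PiK M a r θ * (VQ M a r * ((Real.sin θ ^ 2)⁻¹ * d 3 ^ 2)) := by
  have id := blockIdentity M a r θ
  have pp : (Δk M a r - a ^ 2 * Real.sin θ ^ 2) / ((r ^ 2 + a ^ 2) ^ 2 * Real.sin θ ^ 2) =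
      -(PiK M a r θ / (r ^ 2 + a ^ 2) ^ 2) * (2 * a * M * r / PiK M a r θ) ^ 2 +
      SigK a r θ ^ 2 / PiK M a r θ * (VQ M a r * (Real.sin θ ^ 2)⁻¹) := by
    unfold VQ
    field_simp
    linear_combination id
  have tp : -(2 * a * M * r) / (r ^ 2 + a ^ 2) ^ 2 =
      -(PiK M a r θ / (r ^ 2 + a ^ 2) ^ 2) * (2 * a * M * r / PiK M a r θ) := by
    field_simp
  have tt : -(PiK M a r θ) / (r ^ 2 + a ^ 2) ^ 2 = -(PiK M a r θ / (r ^ 2 + a ^ 2) ^ 2) := by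
    rw [neg_div]
  simp only [Gtilde, Fin.sum_univ_four]
  rw [pp, tp, tt]
  simp [Matrix.of_apply, Matrix.cons_val]
  ring

/-- `Gtilde` is `Ω = ΣΔ/(r²+a²)²` times the inverse of `gTl`. -/
lemma Gtilde_mul_gTl {M a r θ : ℝ} (hSig : 0 < SigK a r θ)
    (hΔ : 0 < Δk M a r) (hs : 0 < Real.sin θ) (hw : 0 < r ^ 2 + a ^ 2) :
    (Gtilde M a r θ).transpose * gTl M a r θ =
      (SigK a r θ * Δk M a r / (r ^ 2 + a ^ 2) ^ 2) • (1 : Matrix (Fin 4) (Fin 4) ℝ) := by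
  have id := blockIdentity M a r θ
  have h : Real.cos θ ^ 2 = 1 - Real.sin θ ^ 2 := by linarith [Real.sin_sq_add_cos_sq θ]
  have e : SigK a r θ - 2 * M * r = Δk M a r - a ^ 2 * Real.sin θ ^ 2 := by
    simp only [SigK, Δk, h]; ring
  ext i j
  fin_cases i <;> fin_cases j <;>
    simp [Gtilde, gTl, VQ, Matrix.mul_apply, Fin.sum_univ_four] <;>
    field_simp
  · linear_combination PiK M a r θ * e + id
  · ring
  · linear_combination (2 * a * M * r) * e
  · linear_combination id

/-- The stress tensor contracted with `X` and `Y`, for an arbitrary covector `d` and an arbitrary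
trace part `S`: lowering the index with the metric turns `Gtilde` into `Ω` times the identity. -/
lemma stress_contract {M a r θ Ω : ℝ} (hG : (Gtilde M a r θ).transpose * gTl M a r θ =
      Ω • (1 : Matrix (Fin 4) (Fin 4) ℝ)) (d X Y : Fin 4 → ℝ) (S : ℝ) :
    -(∑ α, ∑ β, ∑ γ,
        (-(∑ δ, Gtilde M a r θ α δ * d δ) * d β + (1 / 2) * (if α = β then 1 else 0) * S) *
          gTl M a r θ α γ * X β * Y γ) =
      Ω * (∑ β, d β * X β) * (∑ γ, d γ * Y γ) - (1 / 2) * quadForm (gTl M a r θ) X Y * S := by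
  have hd : ∀ γ, ∑ α, (∑ δ, Gtilde M a r θ α δ * d δ) * gTl M a r θ α γ = Ω * d γ := by
    intro γ
    have h1 : ∑ α, (∑ δ, Gtilde M a r θ α δ * d δ) * gTl M a r θ α γ =
        ∑ δ, ((Gtilde M a r θ).transpose * gTl M a r θ) δ γ * d δ := by
      simp only [Matrix.mul_apply, Matrix.transpose_apply, Finset.sum_mul]
      rw [Finset.sum_comm]
      exact Finset.sum_congr rfl fun _ _ => Finset.sum_congr rfl fun _ _ => by ring
    rw [h1, hG]
    simp [Matrix.one_apply]
  have h1 : ∑ α, ∑ β, ∑ γ,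
        (-(∑ δ, Gtilde M a r θ α δ * d δ) * d β + (1 / 2) * (if α = β then 1 else 0) * S) *
          gTl M a r θ α γ * X β * Y γ =
      -((∑ β, d β * X β) *
        ∑ γ, (∑ α, (∑ δ, Gtilde M a r θ α δ * d δ) * gTl M a r θ α γ) * Y γ) +
      (1 / 2) * quadForm (gTl M a r θ) X Y * S := by
    unfold quadForm
    generalize gTl M a r θ = g
    set f : Fin 4 → ℝ := fun α => ∑ δ, Gtilde M a r θ α δ * d δ
    change ∑ α, ∑ β, ∑ γ, (-(f α) * d β + (1 / 2) * (if α = β then 1 else 0) * S) *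
          g α γ * X β * Y γ = -((∑ β, d β * X β) * ∑ γ, (∑ α, f α * g α γ) * Y γ) + _
    simp only [Fin.sum_univ_four, Fin.reduceEq, if_true, if_false]
    ring
  rw [h1]
  simp only [hd]
  have h2 : ∑ γ, Ω * d γ * Y γ = Ω * ∑ γ, d γ * Y γ := by
    rw [Finset.mul_sum]; exact Finset.sum_congr rfl fun _ _ => by ring
  rw [h2]; ring

/-- The density `P̃^t` of `T_χ`, with squares completed along `T_⊥`. -/
lemma tmomentum_Tchi {M a : ℝ} (χ : ℝ → ℝ) (u : V4 → ℝ) (x : V4) (hPi : 0 < PiK M a (x 1) (x 2))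
    (hs : 0 < Real.sin (x 2)) (hw : 0 < x 1 ^ 2 + a ^ 2) :
    2 * tmomentum M a (Tchi M a χ) zeroFn u 0 x =
      PiK M a (x 1) (x 2) / (x 1 ^ 2 + a ^ 2) ^ 2 *
          ((pd 0 u x + 2 * a * M * x 1 / PiK M a (x 1) (x 2) * pd 3 u x) ^ 2 +
            2 * (χ (x 1) * ωH M a - 2 * a * M * x 1 / PiK M a (x 1) (x 2)) *
              (pd 0 u x + 2 * a * M * x 1 / PiK M a (x 1) (x 2) * pd 3 u x) * pd 3 u x) +
        tpd M a 1 u x ^ 2 + VQ M a (x 1) * pd 2 u x ^ 2 +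
        SigK a (x 1) (x 2) ^ 2 / PiK M a (x 1) (x 2) *
          (VQ M a (x 1) * ((Real.sin (x 2) ^ 2)⁻¹ * pd 3 u x ^ 2)) +
        Vpot M a (x 1) * u x ^ 2 := by
  have hz : ∀ β, tpd M a β zeroFn x = 0 := by
    intro β; simp [tpd, pd, zeroFn]
  have hG := Gtilde_eq (M := M) hPi hs hw (fun i => tpd M a i u x)
  have t0 : tpd M a 0 u x = pd 0 u x := by simp [tpd]
  have t2 : tpd M a 2 u x = pd 2 u x := by simp [tpd]
  have t3 : tpd M a 3 u x = pd 3 u x := by simp [tpd]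
  have hq : ∑ β, Gtilde M a (x 1) (x 2) 0 β *
        (-(zeroFn x) * tpd M a β u x * u x + (1 / 2) * tpd M a β zeroFn x * u x ^ 2) = 0 := by
    refine Finset.sum_eq_zero fun β _ => ?_
    rw [hz, zeroFn]; ring
  have hn : ∑ γ, Gtilde M a (x 1) (x 2) 0 γ * tpd M a γ u x =
      -(PiK M a (x 1) (x 2) / (x 1 ^ 2 + a ^ 2) ^ 2 *
        (pd 0 u x + 2 * a * M * x 1 / PiK M a (x 1) (x 2) * pd 3 u x)) := by
    simp only [Gtilde, Fin.sum_univ_four, t0, t2, t3]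
    simp [Matrix.of_apply, Matrix.cons_val]
    field_simp
    ring
  have hX : ∑ β, tpd M a β u x * Tchi M a χ x β = pd 0 u x + χ (x 1) * ωH M a * pd 3 u x := by
    simp [Tchi, Fin.sum_univ_four, t0, t3]; ring
  have hX0 : Tchi M a χ x 0 = 1 := by simp [Tchi]
  unfold tmomentum
  rw [hq, hn, hX, hX0, hG, t0, t2, t3]
  ring

/-- **Lemma 4.2 (Dominant energy condition for the transformed energy-momentum tensor).** -/
theorem dominant_energy_condition (M : ℝ) (hM : 0 < M) (χ : ℝ → ℝ) (hχ : IsCutoff M χ) :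
    ∃ abar C : ℝ, 0 < abar ∧ abar ≤ M ∧ 0 < C ∧
      ∀ a : ℝ, |a| < abar →
        ∀ u : V4 → ℝ, ContDiffOn ℝ (⊤ : ℕ∞) u (ext M a) →
          -- (i) dominant energy condition
          (∀ x ∈ ext M a, ∀ X Y : Fin 4 → ℝ,
            quadForm (gTl M a (x 1) (x 2)) X X ≤ 0 → 0 < X 0 →
            quadForm (gTl M a (x 1) (x 2)) Y Y ≤ 0 → 0 < Y 0 →
              0 ≤ -(∑ α, ∑ β, ∑ γ,
                tStress M a u α β x * gTl M a (x 1) (x 2) α γ * X β * Y γ)) ∧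
          -- (ii) positivity of the T_χ momentum density
          (∀ x ∈ ext M a,
            (pd 0 u x + 2 * a * M * x 1 / PiK M a (x 1) (x 2) * pd 3 u x) ^ 2 +
                (tpd M a 1 u x) ^ 2 +
                VQ M a (x 1) *
                  ((pd 2 u x) ^ 2 + (Real.sin (x 2) ^ 2)⁻¹ * (pd 3 u x) ^ 2) +
                Vpot M a (x 1) * u x ^ 2 ≤
              C * tmomentum M a (Tchi M a χ) zeroFn u 0 x) := by
  refine ⟨M / 1000, 8, by positivity, by linarith, by norm_num, ?_⟩
  intro a ha u _
  refine ⟨?_, ?_⟩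
  · rintro x ⟨hr, hθ0, hθπ⟩ X Y hX hX0 hY hY0
    obtain ⟨hMr, -, -, hΔ, -, hP0, -, hV, hSig, -⟩ := kerr_bounds (x 2) hM ha hr
    have hs : 0 < Real.sin (x 2) := Real.sin_pos_of_pos_of_lt_pi hθ0 hθπ
    have hw : 0 < x 1 ^ 2 + a ^ 2 := by
      have : 0 < x 1 := by linarith
      positivity
    have hPi : 0 < PiK M a (x 1) (x 2) := lt_of_lt_of_le (by positivity) hP0
    have hG := Gtilde_eq (M := M) hPi hs hw (fun i => tpd M a i u x)
    have hcon := stress_contract (Gtilde_mul_gTl (M := M) hSig hΔ hs hw)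
      (fun i => tpd M a i u x) X Y
      ((∑ ρ, ∑ σ, Gtilde M a (x 1) (x 2) ρ σ * tpd M a ρ u x * tpd M a σ u x) +
        Vpot M a (x 1) * u x ^ 2)
    unfold tStress
    refine hcon.symm ▸ ?_
    rw [gTl_eq hSig hPi] at hX hY ⊢
    rw [hG]
    simp only [Fin.sum_univ_four, VQ]
    set S := SigK a (x 1) (x 2)
    set P := PiK M a (x 1) (x 2)
    set D := Δk M a (x 1)
    set w := x 1 ^ 2 + a ^ 2
    set s := Real.sin (x 2)
    set ω := 2 * a * M * x 1 / P
    have hΩ : 0 < S * D / w ^ 2 := by positivity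
    have hW : 0 ≤ Vpot M a (x 1) * u x ^ 2 / (S * D / w ^ 2) := by positivity
    have key := diagonal_dec (k0 := S * D / P) (k1 := S * D / w ^ 2) (k2 := S)
      (k3 := P * s ^ 2 / S) (x0 := X 0) (x1 := X 1) (x2 := X 2) (x3 := X 3 - ω * X 0)
      (y0 := Y 0) (y1 := Y 1) (y2 := Y 2) (y3 := Y 3 - ω * Y 0)
      (tpd M a 0 u x + ω * tpd M a 3 u x) (tpd M a 1 u x) (tpd M a 2 u x) (tpd M a 3 u x)
      (by positivity) hΩ hSig (by positivity) hW hX0.le hY0.le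
      (by linarith) (by linarith)
    have key' := mul_nonneg hΩ.le key
    refine key'.trans_eq ?_
    -- The factor `Ω` turns each inverse frame norm into the matching entry of `Gtilde`.
    have hin : ∀ d0 d1 d2 d3 v : ℝ, S * D / w ^ 2 *
        (-(d0 ^ 2 / (S * D / P)) + d1 ^ 2 / (S * D / w ^ 2) + d2 ^ 2 / S +
          d3 ^ 2 / (P * s ^ 2 / S) + v / (S * D / w ^ 2)) =
        -(P / w ^ 2) * d0 ^ 2 + d1 ^ 2 + D / w ^ 2 * d2 ^ 2 +
          S ^ 2 / P * (D / w ^ 2 * ((s ^ 2)⁻¹ * d3 ^ 2)) + v := by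
      intro d0 d1 d2 d3 v
      field_simp
    rw [mul_sub, mul_left_comm (S * D / w ^ 2) (1 / 2 * _), hin]
    ring
  · rintro x ⟨hr, hθ0, hθπ⟩
    obtain ⟨hMr, -, -, hΔ, -, hP0, hP1, hV, hSig, hPiSig⟩ := kerr_bounds (x 2) hM ha hr
    have hδ := shift_abs_le (x 2) hM hχ ha hr
    have hs : 0 < Real.sin (x 2) := Real.sin_pos_of_pos_of_lt_pi hθ0 hθπ
    have hs1 := Real.sin_sq_le_one (x 2)
    have hw : 0 < x 1 ^ 2 + a ^ 2 := by
      have : 0 < x 1 := by linarith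
      positivity
    have hPi : 0 < PiK M a (x 1) (x 2) := lt_of_lt_of_le (by positivity) hP0
    have hmom := tmomentum_Tchi χ u x hPi hs hw
    have hQ : 0 < VQ M a (x 1) := by unfold VQ; positivity
    have hB0 : 1 / 2 ≤ PiK M a (x 1) (x 2) / (x 1 ^ 2 + a ^ 2) ^ 2 := by
      rw [le_div_iff₀ (by positivity)]; linarith
    have hB1 : PiK M a (x 1) (x 2) / (x 1 ^ 2 + a ^ 2) ^ 2 ≤ 1 := by
      rw [div_le_one (by positivity)]; exact hP1
    have hE : 1 / 2 ≤ SigK a (x 1) (x 2) ^ 2 / PiK M a (x 1) (x 2) := by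
      rw [le_div_iff₀ hPi]; linarith
    have hinv : 1 ≤ (Real.sin (x 2) ^ 2)⁻¹ := (one_le_inv₀ (by positivity)).2 hs1
    set B := PiK M a (x 1) (x 2) / (x 1 ^ 2 + a ^ 2) ^ 2
    set E := SigK a (x 1) (x 2) ^ 2 / PiK M a (x 1) (x 2)
    set δ := χ (x 1) * ωH M a - 2 * a * M * x 1 / PiK M a (x 1) (x 2)
    set T := pd 0 u x + 2 * a * M * x 1 / PiK M a (x 1) (x 2) * pd 3 u x
    set f := pd 3 u x
    set F := VQ M a (x 1) * ((Real.sin (x 2) ^ 2)⁻¹ * f ^ 2) with hF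
    have hF0 : 0 ≤ F := by positivity
    have hδf : δ ^ 2 * f ^ 2 ≤ F / 16 := by
      have e1 : δ ^ 2 * f ^ 2 ≤ VQ M a (x 1) / 16 * f ^ 2 :=
        mul_le_mul_of_nonneg_right hδ (sq_nonneg f)
      have e2 : VQ M a (x 1) * (1 * f ^ 2) ≤ F := by rw [hF]; gcongr
      linarith
    -- Weighted Young inequality for the cross term: `2 |δ T f| ≤ T²/2 + 2 δ² f²`.
    have hyoung : T ^ 2 / 2 - F / 8 ≤ T ^ 2 + 2 * δ * T * f := by
      nlinarith [sq_nonneg (T + 2 * (δ * f))]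
    have h1 : T ^ 2 / 4 - F / 8 ≤ B * (T ^ 2 + 2 * δ * T * f) := by
      have e1 : B * (T ^ 2 / 2 - F / 8) ≤ B * (T ^ 2 + 2 * δ * T * f) :=
        mul_le_mul_of_nonneg_left hyoung (by linarith)
      have e2 : 1 / 2 * T ^ 2 ≤ B * T ^ 2 := mul_le_mul_of_nonneg_right hB0 (sq_nonneg T)
      have e3 : B * F ≤ 1 * F := mul_le_mul_of_nonneg_right hB1 hF0
      linarith
    have h2 : 1 / 2 * F ≤ E * F := mul_le_mul_of_nonneg_right hE hF0
    have h3 : 0 ≤ VQ M a (x 1) * pd 2 u x ^ 2 := by positivity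
    have h4 : 0 ≤ Vpot M a (x 1) * u x ^ 2 := by positivity
    have h5 := sq_nonneg (tpd M a 1 u x)
    rw [mul_add, ← hF]
    linarith

end KerrPaper
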